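/- Let n, k be integers with k > 2 and k dividing n, and let P be the matrix of an equipartition of [n] into k clusters with P_{ij} = 1 if i,j in the same cluster and −1/(k−1) otherwise. Then P is symmetric positive semidefinite of rank k−1, and has exactly two distinct eigenvalues: n/(k−1), whose eigenspace has dimension k−1 and is exactly the set of vectors in ℝ^n that are constant on each cluster and whose coordinates sum to 0; and 0, whose eigenspace has dimension n−k+1. -/

import Mathlib

open scoped Classical

/-!
Write `J` for the all-ones matrix and `E` for the indicator of lying in the same cluster, so that
`(k - 1) P = k E - J`. Every vector `P x` is constant on clusters and has zero sum, because all
clusters have the same size; and on a vector `x` of that kind `J x = 0` and `E x = (n / k) x`,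
whence `P x = (n / (k - 1)) x`. So `P` is `n / (k - 1)` times a projection onto these vectors,
and the whole spectral description follows; the projection being self-adjoint, `P` is positive
semidefinite.
-/

section ScaledProjection

open Module Module.End

variable {K V : Type*} [Field K] [AddCommGroup V] [Module K V] {f : End K V} {μ : K}

lemma eigenspace_le_range (hμ : μ ≠ 0) : f.eigenspace μ ≤ LinearMap.range f := fun x hx =>
  ⟨μ⁻¹ • x, by rw [map_smul, mem_eigenspace_iff.mp hx, inv_smul_smul₀ hμ]⟩

lemma eq_or_eq_zero_of_hasEigenvalue (hf : LinearMap.range f ≤ f.eigenspace μ) {t : K}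
    (ht : f.HasEigenvalue t) : t = μ ∨ t = 0 := by
  refine or_iff_not_imp_right.mpr fun ht₀ => ?_
  obtain ⟨v, hv⟩ := ht.exists_hasEigenvector
  have hvμ : f v = μ • v := mem_eigenspace_iff.mp (hf (eigenspace_le_range ht₀ hv.1))
  exact smul_left_injective K hv.2 (hv.apply_eq_smul.symm.trans hvμ)

lemma hasEigenvalue_of_finrank_pos (h : 0 < finrank K (f.eigenspace μ)) : f.HasEigenvalue μ := by
  refine hasEigenvalue_iff.mpr fun hbot => h.ne' ?_
  rw [hbot, finrank_bot]

lemma posSemidef_of_mul_self_eq_smul {ι R : Type*} [Fintype ι] [Field R] [PartialOrder R]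
    [StarRing R] [StarOrderedRing R] [PosMulReflectLT R] {A : Matrix ι ι R} {μ : R}
    (hA : A.IsHermitian) (hμ : 0 < μ) (h : A * A = μ • A) : A.PosSemidef := by
  have hAA : A = μ⁻¹ • (A.conjTranspose * A) := by rw [hA.eq, h, inv_smul_smul₀ hμ.ne']
  rw [hAA]
  exact (Matrix.posSemidef_conjTranspose_mul_self A).smul (inv_nonneg.mpr hμ.le)

end ScaledProjection

section Contrasts

open Module

variable {K ι κ : Type*} [Field K] [Fintype ι] {c : ι → κ}

variable (K) in
/-- The space of contrasts between the clusters of `c` (in the sense of statistics): the vectors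
that are pulled back from the set of clusters and have zero sum. -/
def clusterContrasts (c : ι → κ) : Submodule K (ι → K) :=
  LinearMap.range (LinearMap.funLeft K K c) ⊓ LinearMap.ker (∑ i, LinearMap.proj i)

lemma mem_clusterContrasts {x : ι → K} :
    x ∈ clusterContrasts K c ↔ (∀ i j, c i = c j → x i = x j) ∧ ∑ i, x i = 0 := by
  have hrange : x ∈ LinearMap.range (LinearMap.funLeft K K c) ↔ ∀ i j, c i = c j → x i = x j := by
    refine Iff.trans ?_ (Function.factorsThrough_iff x).symm
    exact exists_congr fun _ => eq_comm
  rw [clusterContrasts, Submodule.mem_inf, hrange, LinearMap.mem_ker, LinearMap.sum_apply]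
  rfl

lemma finrank_clusterContrasts [Fintype κ] (hc : Function.Surjective c)
    (hι : (Fintype.card ι : K) ≠ 0) :
    finrank K (clusterContrasts K c) = Fintype.card κ - 1 := by
  let pullback := LinearMap.funLeft K K c
  let total : (κ → K) →ₗ[K] K := (∑ i, LinearMap.proj i) ∘ₗ pullback
  have hmap : clusterContrasts K c = (LinearMap.ker total).map pullback := by
    rw [LinearMap.ker_comp, Submodule.map_comap_eq, clusterContrasts]
  have htotal : total ≠ 0 := fun h => hι <| by
    simpa [total, pullback, LinearMap.funLeft_apply] using LinearMap.congr_fun h 1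
  have hpullback : Function.Injective pullback := LinearMap.funLeft_injective_of_surjective K K c hc
  have hker := Module.Dual.finrank_ker_add_one_of_ne_zero htotal
  rw [finrank_fintype_fun_eq_card] at hker
  rw [hmap, ← (Submodule.equivMapOfInjective pullback hpullback _).finrank_eq]
  omega

end Contrasts

section Equipartition

open Finset

variable {ι κ : Type*} [Fintype ι] [DecidableEq κ] {c : ι → κ} {m : ℕ}

lemma surjective_of_card_fiber_eq [Nonempty ι] (hc : ∀ j, #{i | c i = j} = m) :
    Function.Surjective c := fun j => by
  obtain ⟨i₀⟩ := ‹Nonempty ι›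
  have hm : 0 < m := hc (c i₀) ▸ card_pos.mpr ⟨i₀, by simp⟩
  obtain ⟨i, hi⟩ := card_pos.mp (hm.trans_eq (hc j).symm)
  exact ⟨i, (mem_filter.mp hi).2⟩

variable [Fintype κ]

lemma sum_comp_of_card_fiber_eq {M : Type*} [AddCommMonoid M]
    (hc : ∀ j, #{i | c i = j} = m) (g : κ → M) : ∑ i, g (c i) = m • ∑ j, g j := by
  rw [← sum_fiberwise' univ c, smul_sum]
  simp only [sum_const, hc]

lemma card_eq_mul_of_card_fiber_eq (hc : ∀ j, #{i | c i = j} = m) :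
    Fintype.card ι = m * Fintype.card κ := by
  simpa using sum_comp_of_card_fiber_eq hc (fun _ => (1 : ℕ))

end Equipartition

section ClusterMatrix

open Finset Module Module.End

variable {K ι κ : Type*} [Field K] [Fintype κ] [DecidableEq κ] {c : ι → κ} {m : ℕ}

variable (K) in
/-- The matrix `P` encoding the partition of `ι` into the fibers of `c` as a Gram matrix of simplex
vertices. The number of clusters is taken to be the number of labels, so empty fibers count. -/
def clusterMatrix (c : ι → κ) : Matrix ι ι K :=
  Matrix.of fun i j => if c i = c j then 1 else -1 / ((Fintype.card κ : K) - 1)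

lemma isSymm_clusterMatrix : (clusterMatrix K c).IsSymm :=
  Matrix.IsSymm.ext fun i j => by simp only [clusterMatrix, Matrix.of_apply, eq_comm]

lemma isHermitian_clusterMatrix [StarRing K] : (clusterMatrix K c).IsHermitian :=
  Matrix.IsHermitian.ext fun i j => by
    simp only [clusterMatrix, Matrix.of_apply, eq_comm (a := c j)]
    split_ifs <;> simp

variable [Fintype ι]

lemma clusterMatrix_mulVec (hκ : (Fintype.card κ : K) ≠ 1) (x : ι → K) (i : ι) :
    (clusterMatrix K c).mulVec x i =
      (Fintype.card κ * ∑ j with c j = c i, x j - ∑ j, x j) / (Fintype.card κ - 1) := by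
  have hκ' : (Fintype.card κ : K) - 1 ≠ 0 := sub_ne_zero.mpr hκ
  rw [sum_filter, mul_sum, ← sum_sub_distrib, sum_div]
  refine sum_congr rfl fun j _ => ?_
  simp only [clusterMatrix, Matrix.of_apply, eq_comm (a := c i)]
  split_ifs
  · field_simp
  · ring

lemma clusterMatrix_mulVec_mem (hκ : (Fintype.card κ : K) ≠ 1)
    (hc : ∀ j, #{i | c i = j} = m) (x : ι → K) :
    (clusterMatrix K c).mulVec x ∈ clusterContrasts K c := by
  refine mem_clusterContrasts.mpr ⟨fun i j hij => ?_, ?_⟩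
  · rw [clusterMatrix_mulVec hκ, clusterMatrix_mulVec hκ, hij]
  · have hfibers : ∑ i, ∑ j with c j = c i, x j = m * ∑ j, x j := by
      rw [sum_comp_of_card_fiber_eq hc fun a => ∑ j with c j = a, x j, sum_fiberwise,
        nsmul_eq_mul]
    simp only [clusterMatrix_mulVec hκ]
    rw [← sum_div, sum_sub_distrib, ← mul_sum, hfibers, sum_const, card_univ,
      card_eq_mul_of_card_fiber_eq hc, nsmul_eq_mul, Nat.cast_mul]
    ring

lemma clusterMatrix_mulVec_of_mem (hκ : (Fintype.card κ : K) ≠ 1)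
    (hc : ∀ j, #{i | c i = j} = m) {x : ι → K} (hx : x ∈ clusterContrasts K c) :
    (clusterMatrix K c).mulVec x =
      ((Fintype.card ι : K) / ((Fintype.card κ : K) - 1)) • x := by
  obtain ⟨hconst, hsum⟩ := mem_clusterContrasts.mp hx
  ext i
  have hfiber : ∑ j with c j = c i, x j = m * x i := by
    rw [sum_congr rfl fun j hj => hconst j i (mem_filter.mp hj).2, sum_const, hc, nsmul_eq_mul]
  rw [clusterMatrix_mulVec hκ, hfiber, hsum, card_eq_mul_of_card_fiber_eq hc, Nat.cast_mul,
    Pi.smul_apply, smul_eq_mul]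
  ring

lemma clusterMatrix_mul_self (hκ : (Fintype.card κ : K) ≠ 1) (hc : ∀ j, #{i | c i = j} = m) :
    clusterMatrix K c * clusterMatrix K c =
      ((Fintype.card ι : K) / ((Fintype.card κ : K) - 1)) • clusterMatrix K c := by
  refine Matrix.mulVec_injective (funext fun x => ?_)
  rw [← Matrix.mulVec_mulVec, Matrix.smul_mulVec,
    clusterMatrix_mulVec_of_mem hκ hc (clusterMatrix_mulVec_mem hκ hc x)]

lemma range_clusterMatrix_le (hκ : (Fintype.card κ : K) ≠ 1) (hc : ∀ j, #{i | c i = j} = m) :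
    LinearMap.range (clusterMatrix K c).mulVecLin ≤ clusterContrasts K c := by
  rintro _ ⟨x, rfl⟩
  exact clusterMatrix_mulVec_mem hκ hc x

lemma clusterContrasts_le_eigenspace (hκ : (Fintype.card κ : K) ≠ 1)
    (hc : ∀ j, #{i | c i = j} = m) :
    clusterContrasts K c ≤ eigenspace (clusterMatrix K c).mulVecLin
      ((Fintype.card ι : K) / ((Fintype.card κ : K) - 1)) := fun _ hx =>
  mem_eigenspace_iff.mpr (clusterMatrix_mulVec_of_mem hκ hc hx)

lemma range_clusterMatrix (hι : (Fintype.card ι : K) ≠ 0) (hκ : (Fintype.card κ : K) ≠ 1)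
    (hc : ∀ j, #{i | c i = j} = m) :
    LinearMap.range (clusterMatrix K c).mulVecLin = clusterContrasts K c :=
  (range_clusterMatrix_le hκ hc).antisymm <| (clusterContrasts_le_eigenspace hκ hc).trans <|
    eigenspace_le_range (div_ne_zero hι (sub_ne_zero.mpr hκ))

lemma eigenspace_clusterMatrix (hι : (Fintype.card ι : K) ≠ 0) (hκ : (Fintype.card κ : K) ≠ 1)
    (hc : ∀ j, #{i | c i = j} = m) :
    eigenspace (clusterMatrix K c).mulVecLin
      ((Fintype.card ι : K) / ((Fintype.card κ : K) - 1)) = clusterContrasts K c :=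
  ((eigenspace_le_range (div_ne_zero hι (sub_ne_zero.mpr hκ))).trans
    (range_clusterMatrix_le hκ hc)).antisymm (clusterContrasts_le_eigenspace hκ hc)

lemma rank_clusterMatrix [Nonempty ι] (hι : (Fintype.card ι : K) ≠ 0)
    (hκ : (Fintype.card κ : K) ≠ 1) (hc : ∀ j, #{i | c i = j} = m) :
    (clusterMatrix K c).rank = Fintype.card κ - 1 := by
  rw [Matrix.rank, range_clusterMatrix hι hκ hc,
    finrank_clusterContrasts (surjective_of_card_fiber_eq hc) hι]

lemma finrank_eigenspace_zero_clusterMatrix [Nonempty ι] (hι : (Fintype.card ι : K) ≠ 0)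
    (hκ : (Fintype.card κ : K) ≠ 1) (hc : ∀ j, #{i | c i = j} = m) :
    finrank K (eigenspace (clusterMatrix K c).mulVecLin 0) =
      Fintype.card ι - Fintype.card κ + 1 := by
  have hsurj := surjective_of_card_fiber_eq hc
  have hle := Fintype.card_le_of_surjective c hsurj
  have hpos : 0 < Fintype.card κ := Fintype.card_pos_iff.mpr (.map c ‹_›)
  have hrank := LinearMap.finrank_range_add_finrank_ker (clusterMatrix K c).mulVecLin
  rw [range_clusterMatrix hι hκ hc, finrank_clusterContrasts hsurj hι,
    finrank_fintype_fun_eq_card] at hrank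
  rw [eigenspace_zero]
  omega

end ClusterMatrix

open Module.End in
theorem stmt13_general {K ι κ : Type*} [Field K] [PartialOrder K] [PosMulReflectLT K]
    [StarRing K] [StarOrderedRing K] [Fintype ι] [DecidableEq ι] [Fintype κ] [DecidableEq κ]
    {n k m : ℕ} (hι : Fintype.card ι = n) (hκ : Fintype.card κ = k) (hn : 0 < n)
    (hk : 1 < k) {c : ι → κ} (hc : ∀ j, (Finset.univ.filter fun i => c i = j).card = m)
    {P : Matrix ι ι K} (hP : ∀ i j, P i j = if c i = c j then 1 else -1 / ((k : K) - 1)) :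
    P.IsSymm ∧
    P.PosSemidef ∧
    P.rank = k - 1 ∧
    (eigenspace (Matrix.toLin' P) ((n : K) / ((k : K) - 1)) : Set (ι → K)) =
      {x | (∀ i j, c i = c j → x i = x j) ∧ ∑ i, x i = 0} ∧
    Module.finrank K (eigenspace (Matrix.toLin' P) ((n : K) / ((k : K) - 1))) = k - 1 ∧
    Module.finrank K (eigenspace (Matrix.toLin' P) 0) = n - k + 1 ∧
    HasEigenvalue (Matrix.toLin' P) ((n : K) / ((k : K) - 1)) ∧
    HasEigenvalue (Matrix.toLin' P) 0 ∧
    (n : K) / ((k : K) - 1) ≠ 0 ∧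
    ∀ t, HasEigenvalue (Matrix.toLin' P) t → t = (n : K) / ((k : K) - 1) ∨ t = 0 := by
  subst hι hκ
  obtain rfl : P = clusterMatrix K c := Matrix.ext hP
  have : Nonempty ι := Fintype.card_pos_iff.mp hn
  have hn' : (Fintype.card ι : K) ≠ 0 := Nat.cast_ne_zero.mpr hn.ne'
  have hk' : (Fintype.card κ : K) ≠ 1 := Nat.cast_ne_one.mpr hk.ne'
  have hμ : 0 < (Fintype.card ι : K) / ((Fintype.card κ : K) - 1) :=
    div_pos (Nat.cast_pos.mpr hn) (sub_pos.mpr (Nat.one_lt_cast.mpr hk))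
  have hmax := eigenspace_clusterMatrix hn' hk' hc
  have hdim := hmax ▸ finrank_clusterContrasts (surjective_of_card_fiber_eq hc) hn'
  have hdim₀ := finrank_eigenspace_zero_clusterMatrix hn' hk' hc
  rw [Matrix.toLin'_apply']
  exact ⟨isSymm_clusterMatrix,
    posSemidef_of_mul_self_eq_smul isHermitian_clusterMatrix hμ (clusterMatrix_mul_self hk' hc),
    rank_clusterMatrix hn' hk' hc, hmax ▸ Set.ext fun _ => mem_clusterContrasts, hdim, hdim₀,
    hasEigenvalue_of_finrank_pos (by omega), hasEigenvalue_of_finrank_pos (by omega), hμ.ne',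
    fun _ => eq_or_eq_zero_of_hasEigenvalue (hmax ▸ range_clusterMatrix_le hk' hc)⟩

theorem stmt13 (n k : ℕ) (hk : 2 < k) (hn : 0 < n) (hdvd : k ∣ n)
    (c : Fin n → Fin k)
    (hc : ∀ j : Fin k, (Finset.univ.filter fun i => c i = j).card = n / k)
    (P : Matrix (Fin n) (Fin n) ℝ)
    (hP : ∀ i j, P i j = if c i = c j then (1 : ℝ) else -1 / ((k : ℝ) - 1)) :
    P.IsSymm ∧
    P.PosSemidef ∧
    P.rank = k - 1 ∧
    ((Module.End.eigenspace (Matrix.toLin' P) ((n : ℝ) / ((k : ℝ) - 1)) :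
          Submodule ℝ (Fin n → ℝ)) : Set (Fin n → ℝ)) =
      {x | (∀ i j, c i = c j → x i = x j) ∧ ∑ i, x i = 0} ∧
    Module.finrank ℝ (Module.End.eigenspace (Matrix.toLin' P) ((n : ℝ) / ((k : ℝ) - 1))) =
      k - 1 ∧
    Module.finrank ℝ (Module.End.eigenspace (Matrix.toLin' P) (0 : ℝ)) = n - k + 1 ∧
    Module.End.HasEigenvalue (Matrix.toLin' P) ((n : ℝ) / ((k : ℝ) - 1)) ∧
    Module.End.HasEigenvalue (Matrix.toLin' P) (0 : ℝ) ∧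
    ((n : ℝ) / ((k : ℝ) - 1) ≠ 0) ∧
    (∀ t : ℝ, Module.End.HasEigenvalue (Matrix.toLin' P) t →
      t = (n : ℝ) / ((k : ℝ) - 1) ∨ t = 0) :=
  stmt13_general (Fintype.card_fin n) (Fintype.card_fin k) hn (by omega) hc hP
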